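/- arXiv:2305.06691 — 2 statements merged into one kernel-verified Lean document; each statement's English description precedes it below -/
import Mathlib

section
/- Let q be a prime power, k ≥ 2 and n = (q^k − 1)/(q − 1) + 1. Then there exists a q-ary single-error-correcting code of length n with one-time feedback and M_cf(n) messages. -/
/-!
The code spends a single symbol before the feedback, so `n1 = 1` and `n2 = H` with
`H = (q ^ k - 1) / (q - 1)`. Let `N x` messages send `x` as their first symbol. If `y` is received,
the `N y` messages that sent `y` may still suffer an error in the second block, so they need
disjoint radius-one balls there; every other message has already used up its error and needs
just one word of its own outside these balls. A radius-one ball has at most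
`1 + H (q - 1) = q ^ k` words, and a Hamming code supplies `N y` disjoint ones as soon as
`N y * q ^ k ≤ q ^ H`. Hence a code exists whenever
`N y * q ^ k + (∑ x, N x - N y) ≤ q ^ H` for every `y` (`code_of_counts`).

With `S = 1 + n (q - 1)` and `a = q ^ H / S` one has `U_q(n) = q a` and
`p_q(n) = q (S (a + 1) - q ^ H)`. Write `M_cf(n) = q a + j`, where `j = 0` in the first case and
`j = q - p_q(n) / q` in the second. Taking `N x = a + 1` for `j` of the symbols and `N x = a`
for the others satisfies the inequality, with equality at the `a + 1` symbols in the second case.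
-/

/-- A `q`-ary single-error-correcting code of length `n1 + n2` with one-time feedback
and `M` messages. -/
def OneTimeFeedbackCode (q n1 n2 M : ℕ) : Prop :=
  ∃ (f : Fin M → (Fin n1 → Fin q)) (g : Fin M → (Fin n1 → Fin q) → (Fin n2 → Fin q)),
    ∀ m m' : Fin M, m ≠ m' →
      Disjoint
        {p : (Fin n1 → Fin q) × (Fin n2 → Fin q) |
          hammingDist p.1 (f m) + hammingDist p.2 (g m p.1) ≤ 1}
        {p : (Fin n1 → Fin q) × (Fin n2 → Fin q) |
          hammingDist p.1 (f m') + hammingDist p.2 (g m' p.1) ≤ 1}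

/-- `U_q(n)`: the largest multiple of `q` not exceeding the Hamming bound. -/
def Uq (q n : ℕ) : ℕ := q * (q ^ n / (q * (1 + n * (q - 1))))

/-- `p_q(n) = (1 + n(q-1)) (U_q(n) + q) - q^n`. -/
def pq (q n : ℕ) : ℕ := (1 + n * (q - 1)) * (Uq q n + q) - q ^ n

/-- The optimal complete-feedback size `M_cf(n)`. -/
def Mcf (q n : ℕ) : ℕ :=
  if q ^ 2 ≤ pq q n then Uq q n else Uq q n + q - pq q n / q

open scoped LinearAlgebra.Projectivization in
/-- The Hamming code: the columns of the check matrix are representatives of the points of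
projective space, so any two of them are linearly independent. Each fiber of the syndrome map is
a code of minimum distance three, and by pigeonhole some fiber has at least `q ^ H / q ^ k`
words. -/
lemma exists_hamming_code {q k H N : ℕ} (hq : IsPrimePow q)
    (hH : H * (q - 1) = q ^ k - 1) (hN : N * q ^ k ≤ q ^ H) :
    ∃ c : Fin N → (Fin H → Fin q), ∀ i j, i ≠ j → 3 ≤ hammingDist (c i) (c j) := by
  classical
  obtain ⟨F, _, _, hF⟩ : ∃ (F : Type) (_ : Field F) (_ : Fintype F), Fintype.card F = q := by
    have : Nonempty (Field (Fin q)) := Fintype.nonempty_field_iff.mpr (by simpa using hq)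
    exact ⟨Fin q, this.some, inferInstance, by simp⟩
  have hq1 : 1 < q := hq.one_lt
  have hcard : Nat.card (ℙ F (Fin k → F)) = H := by
    have h := Projectivization.card F (Fin k → F)
    simp only [Nat.card_eq_fintype_card, Fintype.card_fun, Fintype.card_fin, hF] at h
    rw [← hH] at h
    exact (Nat.eq_of_mul_eq_mul_right (by omega) h).symm
  let e : Fin H ≃ ℙ F (Fin k → F) := (Finite.equivFinOfCardEq hcard).symm
  let v : Fin H → (Fin k → F) := fun i => (e i).rep
  have hv0 : ∀ i, v i ≠ 0 := fun i => (e i).rep_nonzero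
  have hv2 : ∀ i j, i ≠ j → ∀ s t : F, s • v i + t • v j = 0 → s = 0 := by
    intro i j hij s t hst
    have h := (Projectivization.independent_pair_iff_ne (e i) (e j)).mpr
      (fun h => hij (e.injective h))
    rw [Projectivization.independent_iff] at h
    have h' : LinearIndependent F ![v i, v j] := by
      have hpair : ![v i, v j] = Projectivization.rep ∘ ![e i, e j] := by
        ext a b
        fin_cases a <;> rfl
      rwa [hpair]
    exact (LinearIndependent.pair_iff.mp h' s t hst).1
  let Φ : (Fin H → F) → (Fin k → F) := fun x => ∑ i, x i • v i
  have hdist : ∀ x y, Φ x = Φ y → x ≠ y → 3 ≤ hammingDist x y := by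
    intro x y hxy hne
    -- Equal syndromes give a linear relation among the columns where `x` and `y` differ, which
    -- is impossible for one or two columns.
    have hsum : ∑ i ∈ Finset.univ.filter (fun i => x i ≠ y i), (x i - y i) • v i = 0 := by
      rw [Finset.sum_filter_of_ne]
      · simpa [Φ, sub_smul, sub_eq_zero] using hxy
      · intro i _ h h'
        simp [h'] at h
    by_contra hlt
    have hpos := hammingDist_pos.mpr hne
    have hc : (Finset.univ.filter (fun i => x i ≠ y i)).card = 1 ∨
        (Finset.univ.filter (fun i => x i ≠ y i)).card = 2 := by
      unfold hammingDist at hlt hpos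
      omega
    rcases hc with hc | hc
    · obtain ⟨i, hi⟩ := Finset.card_eq_one.mp hc
      have hmem : i ∈ Finset.univ.filter (fun i => x i ≠ y i) := by simp [hi]
      rw [hi, Finset.sum_singleton, smul_eq_zero] at hsum
      rcases hsum with h | h
      · exact (Finset.mem_filter.mp hmem).2 (sub_eq_zero.mp h)
      · exact hv0 i h
    · obtain ⟨i, j, hij, hi⟩ := Finset.card_eq_two.mp hc
      have hmem : i ∈ Finset.univ.filter (fun i => x i ≠ y i) := by simp [hi]
      rw [hi, Finset.sum_pair hij] at hsum
      exact (Finset.mem_filter.mp hmem).2 (sub_eq_zero.mp (hv2 i j hij _ _ hsum))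
  obtain ⟨s, -, hs⟩ := Finset.exists_le_card_fiber_of_mul_le_card_of_maps_to
    (s := (Finset.univ : Finset (Fin H → F))) (t := (Finset.univ : Finset (Fin k → F)))
    (f := Φ) (n := N) (fun _ _ => Finset.mem_univ _) Finset.univ_nonempty
    (by simpa [hF, mul_comm] using hN)
  obtain ⟨ι⟩ : Nonempty (Fin N ↪ {x // x ∈ Finset.univ.filter (fun x => Φ x = s)}) :=
    Function.Embedding.nonempty_of_card_le (by rwa [Fintype.card_fin, Fintype.card_coe])
  let ε : F ≃ Fin q := Fintype.equivFinOfCardEq hF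
  refine ⟨fun i a => ε ((ι i).1 a), fun i j hij => ?_⟩
  rw [hammingDist_comp (fun _ => ε) (fun _ => ε.injective)]
  refine hdist _ _ ?_ (fun h => hij (ι.injective (Subtype.ext h)))
  rw [(Finset.mem_filter.mp (ι i).2).2, (Finset.mem_filter.mp (ι j).2).2]

/-- A word of the radius-one ball is the center or changes one coordinate to one of the `q - 1`
other symbols. -/
lemma card_ball_le {q H : ℕ} (c : Fin H → Fin q) :
    (Finset.univ.filter (fun y => hammingDist y c ≤ 1)).card ≤ 1 + H * (q - 1) := by
  classical
  have hsub : Finset.univ.filter (fun y => hammingDist y c ≤ 1) ⊆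
      {c} ∪ Finset.univ.biUnion (fun i : Fin H =>
        (Finset.univ.erase (c i)).image (fun b => Function.update c i b)) := by
    intro y hy
    have hy' : hammingDist y c ≤ 1 := (Finset.mem_filter.mp hy).2
    by_cases hyc : y = c
    · simp [hyc]
    · have h1 : (Finset.univ.filter (fun i => y i ≠ c i)).card = 1 := by
        have := hammingDist_pos.mpr hyc
        unfold hammingDist at this hy'
        omega
      obtain ⟨i, hi⟩ := Finset.card_eq_one.mp h1
      have hmem : ∀ a, y a ≠ c a ↔ a = i := fun a => by
        have := Finset.ext_iff.mp hi a
        simpa using this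
      refine Finset.mem_union_right _ (Finset.mem_biUnion.mpr ⟨i, Finset.mem_univ _,
        Finset.mem_image.mpr ⟨y i, by simpa using (hmem i).mpr rfl, ?_⟩⟩)
      ext a
      by_cases ha : a = i
      · subst ha; simp
      · have := not_not.mp (mt (hmem a).mp ha)
        simp [Function.update_of_ne ha, this]
  refine (Finset.card_le_card hsub).trans ((Finset.card_union_le _ _).trans ?_)
  rw [Finset.card_singleton]
  refine Nat.add_le_add_left (Finset.card_biUnion_le.trans ?_) 1
  refine (Finset.sum_le_card_nsmul _ _ (q - 1) fun i _ => ?_).trans (by simp)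
  exact Finset.card_image_le.trans (by simp)

lemma hammingDist_fin_one {q : ℕ} (y z : Fin 1 → Fin q) :
    hammingDist y z = if y 0 = z 0 then 0 else 1 := by
  by_cases h : y 0 = z 0 <;> simp [hammingDist, h, Finset.filter_singleton]

/-- `N x` messages start with the symbol `x`; the last hypothesis says that, once `y` is received,
the second block has room for `N y` radius-one balls and one word for each other message. -/
lemma code_of_counts {q k H M : ℕ} (hq : IsPrimePow q)
    (hH : H * (q - 1) = q ^ k - 1) (N : Fin q → ℕ) (hM : ∑ x, N x = M)
    (hN : ∀ y, N y * q ^ k + (M - N y) ≤ q ^ H) :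
    OneTimeFeedbackCode q 1 H M := by
  classical
  have hqk : 1 + H * (q - 1) = q ^ k := by
    have := Nat.one_le_pow k q hq.pos
    omega
  choose c hc using fun y => exists_hamming_code (N := N y) hq hH (by have := hN y; omega)
  let μ : Fin M ≃ Σ x, Fin (N x) := (Fintype.equivFinOfCardEq (by simpa using hM)).symm
  let balls : Fin q → Finset (Fin H → Fin q) := fun y =>
    Finset.univ.biUnion fun i => Finset.univ.filter (fun z => hammingDist z (c y i) ≤ 1)
  have hballs : ∀ y, (balls y).card ≤ N y * q ^ k := by
    intro y
    refine Finset.card_biUnion_le.trans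
      ((Finset.sum_le_card_nsmul _ _ (q ^ k) fun i _ => ?_).trans (by simp))
    exact (card_ball_le _).trans hqk.le
  have hothers : ∀ y, Fintype.card {m : Σ x, Fin (N x) // m.1 ≠ y} = M - N y := by
    intro y
    have h1 : Fintype.card {m : Σ x, Fin (N x) // m.1 = y} = N y := by
      rw [Fintype.card_congr (Equiv.sigmaSubtype y), Fintype.card_fin]
    have h2 := Fintype.card_subtype_compl (fun m : Σ x, Fin (N x) => m.1 = y)
    rw [h1, Fintype.card_sigma] at h2
    simpa [hM] using h2
  have hemb : ∀ y, Nonempty ({m : Σ x, Fin (N x) // m.1 ≠ y} ↪ {z // z ∈ (balls y)ᶜ}) := by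
    intro y
    refine Function.Embedding.nonempty_of_card_le ?_
    rw [hothers, Fintype.card_coe, Finset.card_compl]
    have h1 := hN y
    have h2 := hballs y
    simp only [Fintype.card_fun, Fintype.card_fin]
    omega
  let ρ := fun y => (hemb y).some
  -- `G m y` is the second block: a Hamming codeword if the first symbol arrived intact, and
  -- otherwise a private word outside the balls around the codewords used for `y`.
  let G : (Σ x, Fin (N x)) → Fin q → (Fin H → Fin q) := fun m y =>
    if h : m.1 = y then c y (h ▸ m.2) else (ρ y ⟨m, h⟩).1
  have hG1 : ∀ y i, G ⟨y, i⟩ y = c y i := fun y i => by simp [G]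
  have hG2 : ∀ m y (h : m.1 ≠ y), G m y = (ρ y ⟨m, h⟩).1 := fun m y h => by simp [G, h]
  have houtside : ∀ y i m (h : m.1 ≠ y), ¬ hammingDist (G m y) (G ⟨y, i⟩ y) ≤ 1 := by
    intro y i m h hle
    rw [hG1, hG2 m y h] at hle
    exact Finset.mem_compl.mp (ρ y ⟨m, h⟩).2 (Finset.mem_biUnion.mpr ⟨i, Finset.mem_univ _,
      Finset.mem_filter.mpr ⟨Finset.mem_univ _, hle⟩⟩)
  refine ⟨fun m _ => (μ m).1, fun m y => G (μ m) (y 0), fun m m' hmm => ?_⟩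
  rw [Set.disjoint_left]
  rintro ⟨y, z⟩ h h'
  obtain ⟨w, hw⟩ : ∃ w, y 0 = w := ⟨_, rfl⟩
  simp only [Set.mem_ofPred_eq, hammingDist_fin_one, hw] at h h'
  clear_value G
  have hne : μ m ≠ μ m' := fun h => hmm (μ.injective h)
  generalize μ m = a at *
  generalize μ m' = b at *
  obtain ⟨x, i⟩ := a
  obtain ⟨x', i'⟩ := b
  -- Both intact: two codewords within distance two. One intact: a private word inside a ball.
  -- Neither intact: a private word assigned twice.
  by_cases hx : x = w <;> by_cases hx' : x' = w
  · subst hx hx'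
    have hii : i ≠ i' := fun h => hne (by rw [h])
    have h3 := hc _ i i' hii
    rw [hG1] at h h'
    have := hammingDist_triangle_left (c _ i) (c _ i') z
    simp only [if_true] at h h'
    omega
  · subst hx
    rw [if_neg (Ne.symm hx')] at h'
    have hz : z = G ⟨x', i'⟩ x := hammingDist_eq_zero.mp (by omega)
    exact houtside x i ⟨x', i'⟩ hx' (by rw [← hz]; simpa using h)
  · subst hx'
    rw [if_neg (Ne.symm hx)] at h
    have hz : z = G ⟨x, i⟩ x' := hammingDist_eq_zero.mp (by omega)
    exact houtside x' i' ⟨x, i⟩ hx (by rw [← hz]; simpa using h')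
  · rw [if_neg (Ne.symm hx)] at h
    rw [if_neg (Ne.symm hx')] at h'
    have hz : z = G ⟨x, i⟩ w := hammingDist_eq_zero.mp (by omega)
    have hz' : z = G ⟨x', i'⟩ w := hammingDist_eq_zero.mp (by omega)
    rw [hz, hG2 _ _ hx, hG2 _ _ hx'] at hz'
    exact hne (congrArg Subtype.val ((ρ w).injective (Subtype.ext hz')))

/-- The case of `code_of_counts` where `N x` is `a + 1` at `j` symbols and `a` at the others.
Only the symbols with the larger count give the binding constraint, so `h1` has the extra
`q ^ k - 1` exactly when `j` is positive. -/
lemma code_of_balanced {q k H a j : ℕ} (hq : IsPrimePow q)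
    (hH : H * (q - 1) = q ^ k - 1) (hj : j ≤ q)
    (h0 : j = 0 → a * (q ^ k + q - 1) ≤ q ^ H)
    (h1 : 0 < j → a * (q ^ k + q - 1) + (q ^ k - 1) + j ≤ q ^ H) :
    OneTimeFeedbackCode q 1 H (q * a + j) := by
  have hq1 := hq.one_lt
  have hQ : 1 ≤ q ^ k := Nat.one_le_pow k q hq.pos
  obtain ⟨Q, hQe⟩ := Nat.exists_eq_add_of_le' hQ
  obtain ⟨r, hr⟩ := Nat.exists_eq_add_of_le' hq1.le
  -- Expressed through `a * q ^ k` and `q * a`, which `omega` treats as atoms below.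
  have hS : a * (q ^ k + q - 1) = a * q ^ k + (q * a - a) := by
    rw [hQe, hr, show Q + 1 + (r + 1) - 1 = Q + 1 + r by omega,
      show (r + 1) * a - a = r * a by rw [Nat.succ_mul]; omega]
    ring
  have ha : a ≤ q * a := Nat.le_mul_of_pos_left a hq.pos
  refine code_of_counts hq hH (fun x => a + if x.val < j then 1 else 0) ?_ fun y => ?_
  · rw [Finset.sum_add_distrib, Finset.sum_const, Finset.card_univ, Fintype.card_fin,
      smul_eq_mul, Finset.sum_boole, Fin.card_filter_val_lt]
    simp [hj]
  · rcases Nat.eq_zero_or_pos j with rfl | hpos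
    · have := h0 rfl
      simp only [not_lt_zero, if_false, add_zero]
      omega
    · have := h1 hpos
      by_cases hy : y.val < j
      · simp only [hy, if_true, add_mul, one_mul]
        omega
      · simp only [hy, if_false, add_zero]
        omega

/-- For a prime power `q` and `n = (q^k - 1)/(q - 1) + 1`, `k ≥ 2`, the optimal
complete-feedback number of messages `M_cf(n)` is achievable with one-time feedback. -/
theorem one_time_feedback_hamming_plus_one (q k n : ℕ)
    (hq : IsPrimePow q) (hk : 2 ≤ k) (hn : n = (q ^ k - 1) / (q - 1) + 1) :
    ∃ n1 n2 : ℕ, n1 + n2 = n ∧ OneTimeFeedbackCode q n1 n2 (Mcf q n) := by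
  have hq1 := hq.one_lt
  obtain ⟨H, hHdef⟩ : ∃ H, H = (q ^ k - 1) / (q - 1) := ⟨_, rfl⟩
  rw [← hHdef] at hn
  have hH : H * (q - 1) = q ^ k - 1 := by
    rw [hHdef]
    exact Nat.div_mul_cancel (Nat.sub_one_dvd_pow_sub_one q k)
  have hQ : 1 ≤ q ^ k := Nat.one_le_pow k q hq.pos
  obtain ⟨S, hSdef⟩ : ∃ S, S = q ^ k + q - 1 := ⟨_, rfl⟩
  have hS : 1 + n * (q - 1) = S := by
    rw [hn, add_mul, hH]
    omega
  have hSpos : 0 < S := by omega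
  obtain ⟨a, hadef⟩ : ∃ a, a = q ^ H / S := ⟨_, rfl⟩
  have ha1 : a * S ≤ q ^ H := hadef ▸ Nat.div_mul_le_self _ _
  have ha2 : q ^ H < a * S + S := by
    have := Nat.lt_div_mul_add (a := q ^ H) hSpos
    rwa [← hadef] at this
  have hU : Uq q n = q * a := by
    rw [Uq, hS, hn, pow_succ', Nat.mul_div_mul_left _ _ hq.pos, hadef]
  have hp : pq q n = q * (a * S + S - q ^ H) := by
    rw [pq, hS, hU, hn, pow_succ', Nat.mul_sub]
    congr 1
    ring
  refine ⟨1, H, by omega, ?_⟩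
  rw [Mcf, hp, hU, pow_two, Nat.mul_div_cancel_left _ hq.pos]
  split_ifs with h
  · exact code_of_balanced (j := 0) hq hH (Nat.zero_le _) (fun _ => by rwa [← hSdef])
      (fun h => absurd h (lt_irrefl 0))
  · have hr : a * S + S - q ^ H < q := by
      by_contra hge
      exact h (Nat.mul_le_mul_left q (not_lt.mp hge))
    rw [Nat.add_sub_assoc hr.le]
    refine code_of_balanced hq hH (Nat.sub_le _ _) (fun _ => by rwa [← hSdef]) (fun _ => ?_)
    rw [← hSdef]
    omega
end

section
/- There exists a 6-ary single-error-correcting code of length 97 with one-time feedback (with block lengths n1 = 92 and n2 = 5) and M = 6^{92} · 16 messages; moreover M · 486 = 6^{97}, where 486 = (6−1)·97 + 1, so this number of messages meets the Hamming bound M·(1 + (q−1)·n) ≤ q^n with equality and is therefore optimal. -/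
/-- The Hamming sphere of radius one around `c`. -/
def unitSphere {q n : ℕ} (c : Fin n → Fin q) : Finset (Fin n → Fin q) :=
  Finset.univ.filter fun z => hammingDist z c = 1

/-- The closed Hamming ball of radius one around `c`. -/
def unitBall {q n : ℕ} (c : Fin n → Fin q) : Finset (Fin n → Fin q) :=
  Finset.univ.filter fun z => hammingDist z c ≤ 1

lemma hammingDist_update {q n : ℕ} (c : Fin n → Fin q) (i : Fin n) (v : Fin q) (hv : v ≠ c i) :
    hammingDist (Function.update c i v) c = 1 := by
  unfold hammingDist
  rw [Finset.card_eq_one]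
  refine ⟨i, ?_⟩
  ext k
  by_cases hk : k = i
  · subst hk; simp [hv]
  · simp [hk]

/-- A point of the unit sphere amounts to a coordinate `i` together with a value other than
`c i` at that coordinate. -/
lemma card_unitSphere {q n : ℕ} (c : Fin n → Fin q) : (unitSphere c).card = n * (q - 1) := by
  have h : unitSphere c = (Finset.univ.sigma fun i => Finset.univ.erase (c i)).image
      (fun p : (_ : Fin n) × Fin q => Function.update c p.1 p.2) := by
    ext z
    simp only [unitSphere, Finset.mem_filter, Finset.mem_univ, true_and, Finset.mem_image,
      Finset.mem_sigma, Finset.mem_erase, and_true]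
    constructor
    · intro hz
      obtain ⟨i, hi⟩ := Finset.card_eq_one.mp hz
      have hi' : ∀ k, z k ≠ c k ↔ k = i := fun k => by
        have := Finset.ext_iff.mp hi k
        simpa using this
      refine ⟨⟨i, z i⟩, (hi' i).mpr rfl, ?_⟩
      funext k
      by_cases hk : k = i
      · subst hk; simp
      · have := not_not.mp (mt (hi' k).mp hk)
        simp [hk, this]
    · rintro ⟨⟨i, v⟩, hv, rfl⟩
      exact hammingDist_update c i v hv
  rw [h, Finset.card_image_of_injOn, Finset.card_sigma]
  · simp
  · rintro ⟨i, v⟩ hv ⟨j, w⟩ hw hvw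
    simp only [Finset.coe_sigma, Set.mem_sigma_iff, Finset.coe_erase, Set.mem_sdiff,
      Set.mem_singleton_iff] at hv hw
    dsimp only at hvw
    have hij : i = j := by
      by_contra hij
      have := congrFun hvw i
      simp [hij] at this
      exact hv.2.2 this
    subst hij
    have := congrFun hvw i
    simp at this
    rw [this]

lemma card_unitBall {q n : ℕ} (c : Fin n → Fin q) : (unitBall c).card = 1 + n * (q - 1) := by
  have h : unitBall c = insert c (unitSphere c) := by
    ext z
    simp only [unitBall, unitSphere, Finset.mem_filter, Finset.mem_univ, true_and,
      Finset.mem_insert]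
    rw [← hammingDist_eq_zero]
    omega
  rw [h, Finset.card_insert_of_notMem (by simp [unitSphere]), card_unitSphere, add_comm]

/-- The Hamming bound for one-time feedback codes: a cloud contains the ball of radius one in the
second block above `f m`, and one further point above each neighbour of `f m`. -/
theorem OneTimeFeedbackCode.hamming_bound {q n1 n2 M : ℕ} (h : OneTimeFeedbackCode q n1 n2 M) :
    M * (1 + (n1 + n2) * (q - 1)) ≤ q ^ (n1 + n2) := by
  obtain ⟨f, g, hd⟩ := h
  let A (m : Fin M) : Finset ((Fin n1 → Fin q) × (Fin n2 → Fin q)) :=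
    Finset.univ.filter fun p => hammingDist p.1 (f m) + hammingDist p.2 (g m p.1) ≤ 1
  have hA : ∀ m, 1 + (n1 + n2) * (q - 1) ≤ (A m).card := by
    intro m
    let U := {f m} ×ˢ unitBall (g m (f m))
    let V := (unitSphere (f m)).image fun y => (y, g m y)
    have hUV : Disjoint U V := by
      rw [Finset.disjoint_left]
      rintro ⟨y, z⟩ hU hV
      simp only [U, V, Finset.mem_product, Finset.mem_singleton, Finset.mem_image, unitSphere,
        Finset.mem_filter, Prod.mk.injEq] at hU hV
      obtain ⟨y', ⟨-, h1⟩, rfl, -⟩ := hV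
      rw [hU.1] at h1
      simp at h1
    have hsub : U ∪ V ⊆ A m := by
      rintro ⟨y, z⟩ hyz
      simp only [U, V, A, Finset.mem_union, Finset.mem_product, Finset.mem_singleton,
        Finset.mem_image, unitSphere, unitBall, Finset.mem_filter, Prod.mk.injEq,
        Finset.mem_univ, true_and] at hyz ⊢
      rcases hyz with ⟨rfl, h1⟩ | ⟨y', h1, rfl, rfl⟩
      · simpa using h1
      · simp [h1]
    have hc := Finset.card_le_card hsub
    rw [Finset.card_union_of_disjoint hUV, Finset.card_product, card_unitBall,
      Finset.card_image_of_injective _ (fun a b hab => congrArg Prod.fst hab),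
      card_unitSphere, Finset.card_singleton] at hc
    linarith
  have hdisj : ∀ m ∈ (Finset.univ : Finset (Fin M)), ∀ m' ∈ (Finset.univ : Finset (Fin M)),
      m ≠ m' → Disjoint (A m) (A m') := by
    intro m _ m' _ hm
    rw [← Finset.disjoint_coe]
    simpa [A] using hd m m' hm
  calc M * (1 + (n1 + n2) * (q - 1))
      = ∑ _m : Fin M, (1 + (n1 + n2) * (q - 1)) := by simp
    _ ≤ ∑ m : Fin M, (A m).card := Finset.sum_le_sum fun m _ => hA m
    _ = (Finset.univ.biUnion A).card := (Finset.card_biUnion hdisj).symm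
    _ ≤ Fintype.card ((Fin n1 → Fin q) × (Fin n2 → Fin q)) := Finset.card_le_univ _
    _ = q ^ (n1 + n2) := by simp [pow_add]

/-- If the second block admits a code `C` with `K` words at pairwise distance at least three, and
the `K * n1 * (q - 1)` points needed for neighbours fit outside the unit balls around `C`, then
each word of the first block can carry `K` messages. -/
theorem oneTimeFeedbackCode_of_code {q n1 n2 K : ℕ} (C : Fin K → (Fin n2 → Fin q))
    (hC : ∀ k k', k ≠ k' → 3 ≤ hammingDist (C k) (C k'))
    (hK : K * (1 + n2 * (q - 1)) + n1 * (q - 1) * K ≤ q ^ n2) :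
    OneTimeFeedbackCode q n1 n2 (q ^ n1 * K) := by
  classical
  let e : Fin (q ^ n1 * K) ≃ (Fin n1 → Fin q) × Fin K :=
    finProdFinEquiv.symm.trans (finFunctionFinEquiv.symm.prodCongr (Equiv.refl _))
  -- the points of the second block outside all the unit balls around codewords
  let T : Finset (Fin n2 → Fin q) := (Finset.univ.biUnion fun k => unitBall (C k))ᶜ
  have hT : n1 * (q - 1) * K ≤ T.card := by
    have h1 : (Finset.univ.biUnion fun k => unitBall (C k)).card ≤ K * (1 + n2 * (q - 1)) := by
      refine Finset.card_biUnion_le.trans ?_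
      simp [card_unitBall]
    simp only [T, Finset.card_compl, Fintype.card_pi, Fintype.card_fin, Finset.prod_const,
      Finset.card_univ]
    omega
  have hinj : ∀ y : Fin n1 → Fin q, ∃ φ : (Fin n1 → Fin q) × Fin K → (Fin n2 → Fin q),
      (∀ p, p.1 ∈ unitSphere y → φ p ∈ T) ∧
      ∀ p p', p.1 ∈ unitSphere y → p'.1 ∈ unitSphere y → φ p = φ p' → p = p' := by
    intro y
    let S : Finset ((Fin n1 → Fin q) × Fin K) := unitSphere y ×ˢ Finset.univ
    have hS : S.card ≤ T.card := by
      simpa [S, Finset.card_product, card_unitSphere] using hT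
    obtain ⟨ψ⟩ : Nonempty (S ↪ T) := Function.Embedding.nonempty_of_card_le (by simpa using hS)
    have hmem : ∀ p : (Fin n1 → Fin q) × Fin K, p.1 ∈ unitSphere y → p ∈ S := fun p hp => by
      simpa [S] using hp
    refine ⟨fun p => if hp : p ∈ S then ψ ⟨p, hp⟩ else C p.2, ?_, ?_⟩
    · intro p hp
      simp only [hmem p hp, dif_pos]
      exact (ψ _).2
    · intro p p' hp hp' h
      simp only [hmem p hp, hmem p' hp', dif_pos] at h
      exact congrArg Subtype.val (ψ.injective (Subtype.ext h))
  choose φ hφT hφi using hinj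
  refine ⟨fun m => (e m).1, fun m y => if (e m).1 = y then C (e m).2 else φ y (e m), ?_⟩
  -- an element of a cloud lies either above `f m` or above a neighbour of `f m`
  have key : ∀ (m : Fin (q ^ n1 * K)) (y : Fin n1 → Fin q) (z : Fin n2 → Fin q),
      hammingDist y (e m).1 + hammingDist z
        (if (e m).1 = y then C (e m).2 else φ y (e m)) ≤ 1 →
      ((e m).1 = y ∧ hammingDist z (C (e m).2) ≤ 1) ∨
      ((e m).1 ∈ unitSphere y ∧ z = φ y (e m)) := by
    intro m y z h
    by_cases hy : (e m).1 = y
    · left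
      rw [if_pos hy] at h
      exact ⟨hy, by omega⟩
    · right
      rw [if_neg hy] at h
      have h0 : hammingDist y (e m).1 ≠ 0 := fun h => hy (hammingDist_eq_zero.mp h).symm
      refine ⟨?_, hammingDist_eq_zero.mp (by omega)⟩
      simp only [unitSphere, Finset.mem_filter, Finset.mem_univ, true_and]
      rw [hammingDist_comm]
      omega
  have hTball : ∀ z ∈ T, ∀ k, ¬ hammingDist z (C k) ≤ 1 := by
    intro z hz k hk
    simp only [T, Finset.mem_compl, Finset.mem_biUnion, not_exists, unitBall, Finset.mem_filter,
      Finset.mem_univ, true_and] at hz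
    exact hz k hk
  intro m m' hm
  rw [Set.disjoint_left]
  rintro ⟨y, z⟩ h h'
  rcases key m y z h with ⟨h1, h2⟩ | ⟨h1, h2⟩ <;>
    rcases key m' y z h' with ⟨h1', h2'⟩ | ⟨h1', h2'⟩
  · by_cases hk : (e m).2 = (e m').2
    · exact hm (e.injective (Prod.ext (h1.trans h1'.symm) hk))
    · have := hC _ _ hk
      have := hammingDist_triangle_left (C (e m).2) (C (e m').2) z
      omega
  · exact hTball z (h2' ▸ hφT y _ h1') _ h2
  · exact hTball z (h2 ▸ hφT y _ h1) _ h2'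
  · have hee := hφi y _ _ h1 h1' (h2.symm.trans h2')
    exact hm (e.injective hee)

/-- Sixteen words of the MDS code `(a, b, a + b, a + 2 b)` over `ℤ/5`, which has
minimum distance three, written in the alphabet `Fin 6` and padded by a zero; `k = 5 a + b`. -/
def sixteenWords (k : Fin 16) : Fin 5 → Fin 6 :=
  ![Fin.ofNat 6 (k / 5), Fin.ofNat 6 (k % 5), Fin.ofNat 6 ((k / 5 + k % 5) % 5),
    Fin.ofNat 6 ((k / 5 + 2 * (k % 5)) % 5), 0]

lemma three_le_dist_sixteenWords :
    ∀ k k', k ≠ k' → 3 ≤ hammingDist (sixteenWords k) (sixteenWords k') := by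
  decide +kernel

/-- A `6`-ary one-time feedback single-error-correcting code of length `97` with
`6 ^ 92 * 16` messages exists (block lengths `92` and `5`); this number of messages
satisfies the Hamming bound `M * (1 + (q - 1) * n) ≤ q ^ n` with equality
(`486 = (6 - 1) * 97 + 1`) and hence is optimal. -/
theorem six_ary_length_97_optimal :
    OneTimeFeedbackCode 6 92 5 (6 ^ 92 * 16) ∧
      6 ^ 92 * 16 * 486 = 6 ^ 97 ∧
      ∀ n1 n2 M : ℕ, n1 + n2 = 97 → OneTimeFeedbackCode 6 n1 n2 M →
        M ≤ 6 ^ 92 * 16 := by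
  refine ⟨oneTimeFeedbackCode_of_code sixteenWords three_le_dist_sixteenWords (by norm_num),
    by norm_num, ?_⟩
  intro n1 n2 M hn h
  have hb := h.hamming_bound
  rw [hn] at hb
  have hN : 6 ^ 92 * 16 * 486 = 6 ^ 97 := by norm_num
  rw [← hN] at hb
  exact Nat.le_of_mul_le_mul_right hb (by norm_num)
end
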